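/- A ρ-maximal-correlation secure cipher is (t,ε)-entropically secure with ε = 2^{(n−t)/2}·ρ, with min-entropy replaced by Rényi entropy: if ρ_m(M;C) ≤ ρ when M is uniform on [1:2ⁿ], then for any pmf p̂ with H₂(p̂) ≥ t and any guess f̃: 𝒞 → ℕ, there exists a random variable F̃ independent of M (namely F̃ distributed as f̃(C) under the uniform-message law) such that for every f: [1:2ⁿ] → ℕ, |ℙ̂{f(M)=f̃(C)} − ℙ̂{f(M)=F̃}| ≤ 2^{(n−t)/2}·ρ. -/

import Mathlib

open BigOperators Finset
open scoped Classical

/-- Hirschfeld–Gebelein–Rényi maximal correlation of a joint pmf `p` on `X × Y`: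
the supremum of `E[f(X) g(Y)]` over zero-mean, unit-second-moment `f`, `g`
(`sSup ∅ = 0` if no such functions exist). -/
noncomputable def maxCorr {X Y : Type*} [Fintype X] [Fintype Y] (p : X → Y → ℝ) : ℝ :=
  sSup {r : ℝ | ∃ f : X → ℝ, ∃ g : Y → ℝ,
    (∑ x, ∑ y, p x y * f x) = 0 ∧
    (∑ x, ∑ y, p x y * g y) = 0 ∧
    (∑ x, ∑ y, p x y * (f x) ^ 2) = 1 ∧
    (∑ x, ∑ y, p x y * (g y) ^ 2) = 1 ∧
    r = ∑ x, ∑ y, p x y * f x * g y}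

/-- Spectral (operator) norm of a real matrix. -/
noncomputable def specNorm {X Y : Type*} [Fintype X] [Fintype Y] (B : Matrix X Y ℝ) : ℝ :=
  sSup {r : ℝ | ∃ v : Y → ℝ, (∑ y, (v y) ^ 2) = 1 ∧
    r = Real.sqrt (∑ x, (B.mulVec v x) ^ 2)}

noncomputable def EE {X Y : Type*} [Fintype X] [Fintype Y] (p : X → Y → ℝ) (h : X → Y → ℝ) : ℝ :=
  ∑ x, ∑ y, p x y * h x y

section aux
variable {X Y : Type*} [Fintype X] [Fintype Y] {p : X → Y → ℝ}

lemma EE_add (g h : X → Y → ℝ) : EE p (fun x y => g x y + h x y) = EE p g + EE p h := by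
  simp only [EE, mul_add, sum_add_distrib]

lemma EE_smul (a : ℝ) (h : X → Y → ℝ) : EE p (fun x y => a * h x y) = a * EE p h := by
  simp only [EE, mul_sum]
  exact sum_congr rfl fun x _ => sum_congr rfl fun y _ => by ring

lemma EE_mono (hp : ∀ x y, 0 ≤ p x y) {g h : X → Y → ℝ} (H : ∀ x y, g x y ≤ h x y) :
    EE p g ≤ EE p h :=
  sum_le_sum fun x _ => sum_le_sum fun y _ => mul_le_mul_of_nonneg_left (H x y) (hp x y)

lemma EE_sum {ι : Type*} (s : Finset ι) (h : ι → X → Y → ℝ) :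
    EE p (fun x y => ∑ i ∈ s, h i x y) = ∑ i ∈ s, EE p (h i) := by
  simp only [EE, mul_sum]
  refine Eq.trans (sum_congr rfl fun x _ => sum_comm) ?_
  rw [sum_comm]

lemma EE_const (h1 : ∑ x, ∑ y, p x y = 1) (a : ℝ) : EE p (fun _ _ => a) = a := by
  simp only [EE, ← sum_mul, h1, one_mul]

lemma EE_nonneg (hp : ∀ x y, 0 ≤ p x y) {h : X → Y → ℝ} (H : ∀ x y, 0 ≤ h x y) :
    0 ≤ EE p h :=
  sum_nonneg fun x _ => sum_nonneg fun y _ => mul_nonneg (hp x y) (H x y)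

lemma le_maxCorr (hp : ∀ x y, 0 ≤ p x y) (f : X → ℝ) (g : Y → ℝ)
    (hf : EE p (fun x _ => f x) = 0) (hg : EE p (fun _ y => g y) = 0)
    (hf2 : EE p (fun x _ => f x ^ 2) = 1) (hg2 : EE p (fun _ y => g y ^ 2) = 1) :
    EE p (fun x y => f x * g y) ≤ maxCorr p := by
  unfold maxCorr
  refine le_csSup ⟨1, ?_⟩ ⟨f, g, hf, hg, hf2, hg2, ?_⟩
  · rintro r ⟨f, g, -, -, h1, h2, rfl⟩
    have : EE p (fun x y => f x * g y) ≤ EE p (fun x y => (1/2) * (f x ^ 2) + (1/2) * (g y ^ 2)) :=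
      EE_mono hp fun x y => by nlinarith [sq_nonneg (f x - g y)]
    rw [EE_add, EE_smul, EE_smul] at this
    simp only [EE, h1, h2, ← mul_assoc] at this
    linarith
  · simp only [EE, mul_assoc]

lemma maxCorr_nonneg (hp : ∀ x y, 0 ≤ p x y) : 0 ≤ maxCorr p := by
  by_cases h : ∃ f : X → ℝ, ∃ g : Y → ℝ, EE p (fun x _ => f x) = 0 ∧ EE p (fun _ y => g y) = 0 ∧
    EE p (fun x _ => f x ^ 2) = 1 ∧ EE p (fun _ y => g y ^ 2) = 1
  · obtain ⟨f, g, h1, h2, h3, h4⟩ := h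
    have a := le_maxCorr hp f g h1 h2 h3 h4
    have b := le_maxCorr hp (fun x => (-1) * f x) g (by rw [EE_smul, h1, mul_zero]) h2
      (by simpa using h3) h4
    simp only [mul_assoc] at b
    rw [EE_smul] at b
    linarith
  · unfold maxCorr
    refine (Real.sSup_nonneg ?_)
    rintro r ⟨f, g, h1, h2, h3, h4, -⟩
    exact absurd ⟨f, g, h1, h2, h3, h4⟩ h

lemma EE_zero_of_sq (hp : ∀ x y, 0 ≤ p x y) (u h : X → Y → ℝ)
    (H : EE p (fun x y => u x y ^ 2) = 0) : EE p (fun x y => u x y * h x y) = 0 := by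
  unfold EE at *
  have h0 : ∀ x y, 0 ≤ p x y * u x y ^ 2 := fun x y => mul_nonneg (hp x y) (sq_nonneg _)
  rw [sum_eq_zero_iff_of_nonneg (fun x _ => sum_nonneg fun y _ => h0 x y)] at H
  refine sum_eq_zero fun x hx => sum_eq_zero fun y hy => ?_
  have := (sum_eq_zero_iff_of_nonneg (fun y _ => h0 x y)).1 (H x hx) y hy
  rcases mul_eq_zero.1 this with h | h
  · rw [h, zero_mul]
  · rw [pow_eq_zero_iff two_ne_zero] at h
    simp [h]

lemma cov0 (hp : ∀ x y, 0 ≤ p x y) (u : X → ℝ) (v : Y → ℝ)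
    (hu : EE p (fun x _ => u x) = 0) (hv : EE p (fun _ y => v y) = 0) :
    EE p (fun x y => u x * v y) ≤
      maxCorr p * (√(EE p fun x _ => u x ^ 2) * √(EE p fun _ y => v y ^ 2)) := by
  have hA : 0 ≤ EE p fun x _ => u x ^ 2 := EE_nonneg hp fun _ _ => sq_nonneg _
  have hB : 0 ≤ EE p fun _ y => v y ^ 2 := EE_nonneg hp fun _ _ => sq_nonneg _
  have hR : 0 ≤ maxCorr p * (√(EE p fun x _ => u x ^ 2) * √(EE p fun _ y => v y ^ 2)) :=
    mul_nonneg (maxCorr_nonneg hp) (by positivity)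
  rcases hA.eq_or_lt with h | hA
  · rw [EE_zero_of_sq hp (fun x _ => u x) (fun _ y => v y) h.symm]; exact hR
  rcases hB.eq_or_lt with h | hB
  · have := EE_zero_of_sq hp (fun _ y => v y) (fun x _ => u x) h.symm
    simp only [mul_comm (v _)] at this
    rw [this]; exact hR
  set a := √(EE p fun x _ => u x ^ 2) with ha
  set b := √(EE p fun _ y => v y ^ 2) with hb
  have ha0 : 0 < a := Real.sqrt_pos.2 hA
  have hb0 : 0 < b := Real.sqrt_pos.2 hB
  have ha2 : a ^ 2 = EE p fun x _ => u x ^ 2 := Real.sq_sqrt hA.le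
  have hb2 : b ^ 2 = EE p fun _ y => v y ^ 2 := Real.sq_sqrt hB.le
  have := le_maxCorr hp (fun x => a⁻¹ * u x) (fun y => b⁻¹ * v y)
    (by rw [EE_smul, hu, mul_zero]) (by rw [EE_smul, hv, mul_zero])
    (by simp only [mul_pow]; rw [EE_smul, ← ha2]; field_simp)
    (by simp only [mul_pow]; rw [EE_smul, ← hb2]; field_simp)
  have e : EE p (fun x y => (a⁻¹ * u x) * (b⁻¹ * v y)) =
      (a⁻¹ * b⁻¹) * EE p (fun x y => u x * v y) := by
    rw [← EE_smul]; congr 1; ext x y; ring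
  rw [e, ← mul_inv, inv_mul_le_iff₀ (by positivity)] at this
  linarith

lemma var_le (h1 : ∑ x, ∑ y, p x y = 1) (h : X → Y → ℝ) :
    EE p (fun x y => (h x y + -EE p h) ^ 2) ≤ EE p (fun x y => h x y ^ 2) := by
  have : (fun x y => (h x y + -EE p h) ^ 2) =
    fun x y => (h x y ^ 2 + (-2 * EE p h) * h x y) + (EE p h) ^ 2 := by ext x y; ring
  rw [this, EE_add, EE_add, EE_smul, EE_const h1]
  nlinarith [sq_nonneg (EE p h)]

lemma cov1 (hp : ∀ x y, 0 ≤ p x y) (h1 : ∑ x, ∑ y, p x y = 1) (u : X → ℝ) (v : Y → ℝ) :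
    EE p (fun x y => u x * v y) - EE p (fun x _ => u x) * EE p (fun _ y => v y) ≤
      maxCorr p * (√(EE p fun x _ => u x ^ 2) * √(EE p fun _ y => v y ^ 2)) := by
  have := cov0 hp (fun x => u x + -EE p (fun x _ => u x)) (fun y => v y + -EE p (fun _ y => v y))
    (by rw [EE_add, EE_const h1]; ring) (by rw [EE_add, EE_const h1]; ring)
  have e : (fun x y => (u x + -EE p (fun x _ => u x)) * (v y + -EE p (fun _ y => v y))) =
    fun x y => ((u x * v y + (-EE p (fun _ y => v y)) * u x) + (-EE p (fun x _ => u x)) * v y)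
      + EE p (fun x _ => u x) * EE p (fun _ y => v y) := by ext x y; ring
  rw [e, EE_add, EE_add, EE_add, EE_smul, EE_smul, EE_const h1] at this
  have k : maxCorr p * (√(EE p fun x _ => (u x + -EE p (fun x _ => u x)) ^ 2) *
      √(EE p fun _ y => (v y + -EE p (fun _ y => v y)) ^ 2)) ≤
      maxCorr p * (√(EE p fun x _ => u x ^ 2) * √(EE p fun _ y => v y ^ 2)) :=
    mul_le_mul_of_nonneg_left (mul_le_mul (Real.sqrt_le_sqrt (var_le h1 fun x _ => u x))
      (Real.sqrt_le_sqrt (var_le h1 fun _ y => v y)) (Real.sqrt_nonneg _) (Real.sqrt_nonneg _))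
      (maxCorr_nonneg hp)
  linarith

lemma cov2 (hp : ∀ x y, 0 ≤ p x y) (h1 : ∑ x, ∑ y, p x y = 1) (u : X → ℝ) (v : Y → ℝ) :
    |EE p (fun x y => u x * v y) - EE p (fun x _ => u x) * EE p (fun _ y => v y)| ≤
      maxCorr p * (√(EE p fun x _ => u x ^ 2) * √(EE p fun _ y => v y ^ 2)) := by
  refine abs_le'.2 ⟨cov1 hp h1 u v, ?_⟩
  have := cov1 hp h1 (fun x => (-1) * u x) v
  simp only [mul_assoc, mul_pow] at this
  rw [EE_smul, EE_smul] at this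
  norm_num at this
  linarith

lemma key (hp : ∀ x y, 0 ≤ p x y) (h1 : ∑ x, ∑ y, p x y = 1) (w : X → ℝ) (f : X → ℕ) (g : Y → ℕ) :
    |EE p (fun x y => w x * (if f x = g y then 1 else 0)) -
      ∑ i ∈ univ.image f, EE p (fun x _ => if f x = i then w x else 0) *
        EE p (fun _ y => if g y = i then 1 else 0)| ≤
      maxCorr p * √(EE p fun x _ => w x ^ 2) := by
  have e : (fun x y => w x * (if f x = g y then (1:ℝ) else 0)) = fun x y =>
      ∑ i ∈ univ.image f, (if f x = i then w x else 0) * (if g y = i then 1 else 0) := by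
    ext x y
    rw [sum_eq_single (f x)]
    · simp [eq_comm]
    · intro b _ hb
      simp [hb.symm]
    · simp
  rw [e, EE_sum, ← sum_sub_distrib]
  refine (abs_sum_le_sum_abs _ _).trans ?_
  refine (sum_le_sum fun i _ => cov2 hp h1 (fun x => if f x = i then w x else 0)
    (fun y => if g y = i then 1 else 0)).trans ?_
  rw [← mul_sum]
  refine mul_le_mul_of_nonneg_left ?_ (maxCorr_nonneg hp)
  refine (Real.sum_sqrt_mul_sqrt_le _ (fun i => EE_nonneg hp fun _ _ => sq_nonneg _)
    (fun i => EE_nonneg hp fun _ _ => sq_nonneg _)).trans ?_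
  rw [← EE_sum, ← EE_sum]
  have a : √(EE p fun x y => ∑ i ∈ univ.image f, (if g y = i then (1:ℝ) else 0) ^ 2) ≤ 1 := by
    refine Real.sqrt_le_iff.2 ⟨zero_le_one, ?_⟩
    rw [one_pow]
    calc _ ≤ EE p (fun _ _ => (1:ℝ)) := EE_mono hp fun x y => by
            simp only [ite_pow, one_pow, ne_eq, two_ne_zero, not_false_eq_true, zero_pow, sum_ite_eq]
            split_ifs <;> norm_num
      _ = 1 := EE_const h1 1
  have b : (fun (x : X) (y : Y) => ∑ i ∈ univ.image f, (if f x = i then w x else 0) ^ 2) =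
      fun x y => w x ^ 2 := by
    ext x y
    simp
  rw [b]
  exact mul_le_of_le_one_right (Real.sqrt_nonneg _) a

end aux

theorem stmt18 (n : ℕ) {C K : Type*} [Fintype C] [Fintype K] [Nonempty K]
    (E : K → Fin (2 ^ n) → C) (ρ : ℝ)
    (hρ : maxCorr (fun (m : Fin (2 ^ n)) (c : C) =>
        ((2 ^ n : ℝ))⁻¹ * ((Fintype.card K : ℝ))⁻¹ *
          ((univ.filter fun k => E k m = c).card : ℝ)) ≤ ρ)
    (phat : Fin (2 ^ n) → ℝ) (hphat : ∀ m, 0 ≤ phat m) (hphat1 : ∑ m, phat m = 1)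
    (t : ℝ) (ht : t ≤ -Real.logb 2 (∑ m, (phat m) ^ 2))
    (ftilde : C → ℕ) :
    ∃ q : ℕ → ℝ,
      (∀ i, q i = ∑ m, ∑ c, (if ftilde c = i then
          ((2 ^ n : ℝ))⁻¹ * ((Fintype.card K : ℝ))⁻¹ *
            ((univ.filter fun k => E k m = c).card : ℝ) else 0)) ∧
      ∀ f : Fin (2 ^ n) → ℕ,
        |(∑ m, ∑ c, phat m * (((Fintype.card K : ℝ))⁻¹ *
            ((univ.filter fun k => E k m = c).card : ℝ)) *
            (if f m = ftilde c then 1 else 0)) -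
          ∑' i : ℕ, (∑ m, if f m = i then phat m else 0) * q i| ≤
        (2 : ℝ) ^ (((n : ℝ) - t) / 2) * ρ := by
  have hK : (Fintype.card K : ℝ) ≠ 0 := by exact_mod_cast Fintype.card_ne_zero
  have hN : (2 ^ n : ℝ) ≠ 0 := by positivity
  refine ⟨_, fun i => rfl, fun f => ?_⟩
  set p : Fin (2 ^ n) → C → ℝ := fun m c => ((2 ^ n : ℝ))⁻¹ * ((Fintype.card K : ℝ))⁻¹ *
          ((univ.filter fun k => E k m = c).card : ℝ) with hpdef
  have hp : ∀ m c, 0 ≤ p m c := fun m c => by simp only [hpdef]; positivity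
  have hmarg : ∀ m, ∑ c, p m c = ((2 ^ n : ℝ))⁻¹ := by
    intro m
    simp only [hpdef]
    rw [← mul_sum, ← Nat.cast_sum,
      ← card_eq_sum_card_fiberwise (f := fun k => E k m) (t := univ) (by simp), card_univ]
    field_simp
  have h1 : ∑ m, ∑ c, p m c = 1 := by
    simp only [hmarg]
    simp
  have hX : ∀ u : Fin (2 ^ n) → ℝ, EE p (fun m _ => u m) = (2 ^ n : ℝ)⁻¹ * ∑ m, u m := by
    intro u
    simp only [EE, ← sum_mul, hmarg, mul_sum]
  have hk := key hp h1 (fun m => 2 ^ n * phat m) f ftilde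
  have e1 : EE p (fun m c => (2 ^ n * phat m) * (if f m = ftilde c then 1 else 0)) =
      ∑ m, ∑ c, phat m * (((Fintype.card K : ℝ))⁻¹ *
            ((univ.filter fun k => E k m = c).card : ℝ)) *
            (if f m = ftilde c then 1 else 0) := by
    unfold EE
    refine sum_congr rfl fun m _ => sum_congr rfl fun c _ => ?_
    simp only [hpdef]
    field_simp
  have e2 : ∑' i : ℕ, (∑ m, if f m = i then phat m else 0) *
        (∑ m, ∑ c, (if ftilde c = i then p m c else 0)) =
      ∑ i ∈ univ.image f, EE p (fun m _ => if f m = i then 2 ^ n * phat m else 0) *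
        EE p (fun _ c => if ftilde c = i then 1 else 0) := by
    rw [tsum_eq_sum (s := univ.image f)]
    · refine sum_congr rfl fun i _ => ?_
      rw [hX]
      congr 1
      · rw [mul_sum]
        refine sum_congr rfl fun m _ => ?_
        split_ifs <;> field_simp
        simp
      · simp [EE]
    · intro i hi
      rw [sum_eq_zero, zero_mul]
      intro m _
      rw [if_neg]
      rintro rfl
      exact hi (mem_image_of_mem _ (mem_univ _))
  have e3 : EE p (fun m _ => (2 ^ n * phat m) ^ 2) = 2 ^ n * ∑ m, phat m ^ 2 := by
    rw [hX]
    simp only [mul_pow, ← mul_sum]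
    field_simp
  rw [e1, e3, ← e2] at hk
  refine hk.trans ?_
  have hS : 0 < ∑ m, phat m ^ 2 := by
    refine lt_of_le_of_ne (sum_nonneg fun _ _ => sq_nonneg _) fun h => ?_
    have h0 := (sum_eq_zero_iff_of_nonneg (fun m _ => sq_nonneg (phat m))).1 h.symm
    rw [sum_eq_zero fun m hm => by simpa using h0 m hm] at hphat1
    exact zero_ne_one hphat1
  have hS2 : ∑ m, phat m ^ 2 ≤ (2:ℝ) ^ (-t) :=
    (Real.logb_le_iff_le_rpow (by norm_num) hS).1 (by linarith)
  have hs : √(2 ^ n * ∑ m, phat m ^ 2) ≤ (2 : ℝ) ^ (((n : ℝ) - t) / 2) := by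
    apply Real.sqrt_le_iff.2 ⟨by positivity, ?_⟩
    rw [← Real.rpow_natCast, ← Real.rpow_natCast, ← Real.rpow_mul (by norm_num)]
    have : ((n : ℝ) - t) / 2 * ((2:ℕ):ℝ) = n + -t := by push_cast; ring
    rw [this, Real.rpow_add (by norm_num)]
    gcongr
  rw [mul_comm]
  exact mul_le_mul hs hρ (maxCorr_nonneg hp) (by positivity)
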